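/- Let l ≥ 1 and let z_1, …, z_l be integers with z_1 ≥ 0 and z_j ≥ 1 for all 2 ≤ j ≤ l. For a rational number x with reduced form a/b (b ≥ 1), write ⟨x⟩ for the point ((b−1)/b, a/b) ∈ ℚ². Then the points ⟨cf(z_1, …, z_l, j)⟩ for j = 1, 2, 3, … all lie on a single line; precisely, writing cf(z_1, …, z_l) = p/q and cf(z_1, …, z_l, 1) = r/s in lowest terms with q, s ≥ 1, each of these points lies on the line through (1, p/q) with slope (ps − qr)/q. -/

import Mathlib

/-- The continued fraction value of a nonempty list of integers:
`cf [z₁, …, z_k] = z₁ + 1/(z₂ + 1/(⋯ + 1/z_k))`, using the convention `1/0 = 0` in `ℚ`. -/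
def cf (l : List ℤ) : ℚ := l.foldr (fun z r => (z : ℚ) + 1 / r) 0

/-- For a rational number `x` with reduced form `a/b` (`b ≥ 1`), the point
`⟨x⟩ = ((b−1)/b, a/b)` in `ℚ²`. -/
def vertexPoint (x : ℚ) : ℚ × ℚ := (((x.den : ℚ) - 1) / (x.den : ℚ), x)

/-!
Partial quotients compose as matrices: if `M` is the product of the matrices `!![z, 1; 1, 0]`, then
its first column is the reduced fraction `p / q = cf(z₁, …, z_l)`, and appending `j` replaces that
column by `j` times itself plus the second column. Hence the cross determinant of `p / q` with
`cf(z₁, …, z_l, j)` is `det M` for every `j`. On the other hand, for any rationals `x` and `y`, the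
line joining `(1, x)` to `⟨y⟩` has slope the cross determinant of `x` and `y` divided by the
denominator of `x`.
-/

/-- The product of the matrices `!![z, 1; 1, 0]` over the partial quotients `z` in `L`. When `L` is
nonempty and all of them but possibly the first are positive, the first column holds the numerator
and the denominator of `cf L`. -/
def cfMatrix (L : List ℤ) : Matrix (Fin 2) (Fin 2) ℤ :=
  (L.map fun z ↦ !![z, 1; 1, 0]).prod

/-- The cross determinant `p * s - q * r` of the reduced fractions `x = p / q` and `y = r / s`. -/
def crossDet (x y : ℚ) : ℤ :=
  x.num * y.den - x.den * y.num

theorem cf_cons (z : ℤ) (L : List ℤ) : cf (z :: L) = z + 1 / cf L := rfl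

theorem cfMatrix_cons (z : ℤ) (L : List ℤ) :
    cfMatrix (z :: L) = !![z, 1; 1, 0] * cfMatrix L := by
  simp [cfMatrix]

theorem cfMatrix_append_singleton (L : List ℤ) (j : ℤ) :
    cfMatrix (L ++ [j]) = cfMatrix L * !![j, 1; 1, 0] := by
  simp [cfMatrix]

theorem cfMatrix_cons_zero_zero (z : ℤ) (L : List ℤ) :
    cfMatrix (z :: L) 0 0 = z * cfMatrix L 0 0 + cfMatrix L 1 0 := by
  simp [cfMatrix_cons, Matrix.mul_apply]

theorem cfMatrix_cons_one_zero (z : ℤ) (L : List ℤ) :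
    cfMatrix (z :: L) 1 0 = cfMatrix L 0 0 := by
  simp [cfMatrix_cons, Matrix.mul_apply]

theorem isCoprime_cfMatrix_col_zero (L : List ℤ) : IsCoprime (cfMatrix L 0 0) (cfMatrix L 1 0) := by
  induction L with
  | nil => simpa [cfMatrix] using isCoprime_one_left
  | cons z L ih =>
    rw [cfMatrix_cons_zero_zero, cfMatrix_cons_one_zero, add_comm]
    exact ih.symm.add_mul_right_left z

theorem cfMatrix_col_zero_nonneg {L : List ℤ} (hL : ∀ w ∈ L, 0 ≤ w) :
    0 ≤ cfMatrix L 0 0 ∧ 0 ≤ cfMatrix L 1 0 := by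
  induction L with
  | nil => simp [cfMatrix]
  | cons z L ih =>
    obtain ⟨hz, hL⟩ := List.forall_mem_cons.mp hL
    obtain ⟨hp, hq⟩ := ih hL
    rw [cfMatrix_cons_zero_zero, cfMatrix_cons_one_zero]
    exact ⟨by positivity, hp⟩

theorem cfMatrix_zero_zero_pos {L : List ℤ} (hL : ∀ w ∈ L, 0 < w) : 0 < cfMatrix L 0 0 := by
  induction L with
  | nil => simp [cfMatrix]
  | cons z L ih =>
    obtain ⟨hz, hL⟩ := List.forall_mem_cons.mp hL
    have hp := ih hL
    have hq := (cfMatrix_col_zero_nonneg fun w hw ↦ (hL w hw).le).2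
    rw [cfMatrix_cons_zero_zero]
    positivity

theorem cf_cons_eq_div (z : ℤ) {L : List ℤ} (hL : ∀ w ∈ L, 0 < w) :
    cf (z :: L) = cfMatrix (z :: L) 0 0 / cfMatrix (z :: L) 1 0 := by
  induction L generalizing z with
  | nil => simp [cf, cfMatrix]
  | cons w L ih =>
    have hp : (cfMatrix (w :: L) 0 0 : ℚ) ≠ 0 := mod_cast (cfMatrix_zero_zero_pos hL).ne'
    rw [cf_cons, ih w (List.forall_mem_cons.mp hL).2, cfMatrix_cons_zero_zero z,
      cfMatrix_cons_one_zero z]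
    push_cast
    field_simp

section Reduced

variable (z : ℤ) {L : List ℤ} (hL : ∀ w ∈ L, 0 < w)
include hL

theorem num_cf_cons : (cf (z :: L)).num = cfMatrix (z :: L) 0 0 := by
  rw [cf_cons_eq_div z hL]
  exact Rat.num_div_eq_of_coprime (cfMatrix_cons_one_zero z L ▸ cfMatrix_zero_zero_pos hL)
    (Int.isCoprime_iff_nat_coprime.mp (isCoprime_cfMatrix_col_zero _))

theorem den_cf_cons : ((cf (z :: L)).den : ℤ) = cfMatrix (z :: L) 1 0 := by
  rw [cf_cons_eq_div z hL]
  exact Rat.den_div_eq_of_coprime (cfMatrix_cons_one_zero z L ▸ cfMatrix_zero_zero_pos hL)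
    (Int.isCoprime_iff_nat_coprime.mp (isCoprime_cfMatrix_col_zero _))

theorem crossDet_cf_append_singleton {j : ℤ} (hj : 0 < j) :
    crossDet (cf (z :: L)) (cf (z :: L ++ [j])) = (cfMatrix (z :: L)).det := by
  have hLj : ∀ w ∈ L ++ [j], 0 < w := by simpa [or_imp, forall_and] using ⟨hL, hj⟩
  rw [crossDet, num_cf_cons z hL, den_cf_cons z hL, List.cons_append, num_cf_cons z hLj,
    den_cf_cons z hLj, ← List.cons_append, cfMatrix_append_singleton, Matrix.det_fin_two]
  simp only [Matrix.mul_apply, Fin.sum_univ_two, Matrix.of_apply, Matrix.cons_val',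
    Matrix.cons_val_zero, Matrix.cons_val_one]
  ring

end Reduced

theorem vertexPoint_snd_sub_eq_crossDet_div_mul (x y : ℚ) :
    (vertexPoint y).2 - x = crossDet x y / x.den * ((vertexPoint y).1 - 1) := by
  have hx : (x.den : ℚ) ≠ 0 := mod_cast x.den_ne_zero
  have hy : (y.den : ℚ) ≠ 0 := mod_cast y.den_ne_zero
  calc y - x = y.num / y.den - x.num / x.den := by rw [Rat.num_div_den, Rat.num_div_den]
    _ = crossDet x y / x.den * ((y.den - 1) / y.den - 1) := by
      simp only [crossDet]
      push_cast
      field_simp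
      ring

theorem vertices_on_a_line_general (z : ℤ) {L : List ℤ} (hL : ∀ w ∈ L, 0 < w) {j : ℤ} (hj : 0 < j) :
    (vertexPoint (cf (z :: L ++ [j]))).2 - cf (z :: L) =
      crossDet (cf (z :: L)) (cf (z :: L ++ [1])) / (cf (z :: L)).den *
        ((vertexPoint (cf (z :: L ++ [j]))).1 - 1) := by
  rw [crossDet_cf_append_singleton z hL one_pos, ← crossDet_cf_append_singleton z hL hj]
  exact vertexPoint_snd_sub_eq_crossDet_div_mul _ _

/-- Let `l ≥ 1` and `z₁, …, z_l` be integers with `z₁ ≥ 0` and `z_j ≥ 1` for `2 ≤ j ≤ l`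
(here `0`-indexed: `0 ≤ z 0` and `1 ≤ z j` for `1 ≤ j < l`). Writing
`cf(z₁, …, z_l) = p/q` and `cf(z₁, …, z_l, 1) = r/s` in lowest terms with `q, s ≥ 1`,
the points `⟨cf(z₁, …, z_l, j)⟩` for `j = 1, 2, 3, …` all lie on the single line through
`(1, p/q)` with slope `(ps − qr)/q`. -/
theorem vertices_on_a_line (l : ℕ) (z : ℕ → ℤ) (hl : 1 ≤ l)
    (h0 : 0 ≤ z 0) (hpos : ∀ j, 1 ≤ j → j < l → 1 ≤ z j)
    (p r : ℤ) (q s : ℤ)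
    (hp : p = (cf ((List.range l).map z)).num)
    (hq : q = ((cf ((List.range l).map z)).den : ℤ))
    (hr : r = (cf ((List.range l).map z ++ [1])).num)
    (hs : s = ((cf ((List.range l).map z ++ [1])).den : ℤ)) :
    ∀ j : ℤ, 1 ≤ j →
      (vertexPoint (cf ((List.range l).map z ++ [j]))).2 - (p : ℚ) / (q : ℚ) =
        ((p * s - q * r : ℤ) : ℚ) / (q : ℚ) *
          ((vertexPoint (cf ((List.range l).map z ++ [j]))).1 - 1) := by
  obtain ⟨k, rfl⟩ := Nat.exists_eq_add_of_le' hl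
  subst hp hq hr hs
  simp only [List.range_succ_eq_map, List.map_cons, List.map_map, Int.cast_natCast, Rat.num_div_den]
  exact fun j hj ↦ vertices_on_a_line_general (z 0) (by grind) hj
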